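/- Suppose ρ₀ : ℝ → ℝ is twice continuously differentiable with ρ₀''(z) = f(ρ₀(z)) for all z ∈ ℝ, ρ₀'(z) > 0 for all z ∈ ℝ, lim_{z→−∞} ρ₀(z) = a, lim_{z→+∞} ρ₀(z) = b, and lim_{z→−∞} ρ₀'(z) = 0. Then a < ρ₀(z) < b for all z ∈ ℝ and ρ₀'(z) = (√2/2)(ρ₀(z)² − a²)(b² − ρ₀(z)²) for all z ∈ ℝ. -/

import Mathlib

open Filter

/-!
The equation `ρ'' = f(ρ)` is `ρ'' = w(ρ) w'(ρ)` for `w(ρ) = (√2/2)(ρ² − a²)(b² − ρ²)`, so the energy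
`(ρ'² − w(ρ)²)/2` is conserved. Both terms vanish at `−∞`, hence `ρ'² = w(ρ)²` everywhere.
Strict monotonicity confines `ρ` to `(a, b)`, where `w > 0`, and `ρ' > 0` selects the root
`ρ' = w(ρ)`.
-/

theorem mem_Ioo_of_strictMono_of_tendsto {α β : Type*}
    [TopologicalSpace α] [Preorder α] [OrderClosedTopology α]
    [PartialOrder β] [IsDirectedOrder β] [IsCodirectedOrder β] [NoMinOrder β] [NoMaxOrder β]
    {f : β → α} {a b : α} (hf : StrictMono f)
    (hbot : Tendsto f atBot (nhds a)) (htop : Tendsto f atTop (nhds b)) (z : β) :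
    f z ∈ Set.Ioo a b := by
  obtain ⟨y, hy⟩ := exists_lt z
  obtain ⟨x, hx⟩ := exists_gt z
  exact ⟨(hf.monotone.le_of_tendsto hbot y).trans_lt (hf hy),
    (hf hx).trans_le (hf.monotone.ge_of_tendsto htop x)⟩

section Energy

variable {E : Type*} [NormedAddCommGroup E]

/-- The energy, at position `x` with velocity `v`, of a motion governed by `u'' = ∇V(u)`.
The sign convention is that `V` is minus the potential energy. -/
noncomputable def energy (V : E → ℝ) (x v : E) : ℝ :=
  ‖v‖ ^ 2 / 2 - V x

variable [InnerProductSpace ℝ E] [CompleteSpace E] {V : E → ℝ} {u v v' : ℝ → E}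

theorem hasDerivAt_energy_zero {t : ℝ} (hu : HasDerivAt u (v t) t) (hv : HasDerivAt v (v' t) t)
    (hV : HasGradientAt V (v' t) (u t)) :
    HasDerivAt (fun s => energy V (u s) (v s)) 0 t := by
  have hkinetic : HasDerivAt (fun s => ‖v s‖ ^ 2 / 2) (inner ℝ (v t) (v' t)) t :=
    (hv.norm_sq.div_const 2).congr_deriv (by ring)
  have hpotential : HasDerivAt (fun s => V (u s)) (inner ℝ (v' t) (v t)) t :=
    hV.hasFDerivAt.comp_hasDerivAt t hu
  exact (hkinetic.sub hpotential).congr_deriv (by rw [real_inner_comm, sub_self])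

theorem energy_eq_energy (hu : ∀ t, HasDerivAt u (v t) t) (hv : ∀ t, HasDerivAt v (v' t) t)
    (hV : ∀ t, HasGradientAt V (v' t) (u t)) (s t : ℝ) :
    energy V (u s) (v s) = energy V (u t) (v t) :=
  have hderiv := fun r => hasDerivAt_energy_zero (hu r) (hv r) (hV r)
  is_const_of_deriv_eq_zero (fun r => (hderiv r).differentiableAt) (fun r => (hderiv r).deriv) s t

theorem energy_eq_of_tendsto {l : Filter ℝ} [l.NeBot] {c : ℝ}
    (hu : ∀ t, HasDerivAt u (v t) t) (hv : ∀ t, HasDerivAt v (v' t) t)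
    (hV : ∀ t, HasGradientAt V (v' t) (u t))
    (hlim : Tendsto (fun s => energy V (u s) (v s)) l (nhds c)) (t : ℝ) :
    energy V (u t) (v t) = c :=
  tendsto_const_nhds_iff.mp (hlim.congr fun s => energy_eq_energy hu hv hV s t)

end Energy

theorem eq_comp_of_hasDerivAt_of_tendsto_zero {w u v w' : ℝ → ℝ} {l : Filter ℝ} [l.NeBot]
    (hu : ∀ t, HasDerivAt u (v t) t) (hv : ∀ t, HasDerivAt v (w (u t) * w' t) t)
    (hw : ∀ t, HasDerivAt w (w' t) (u t))
    (hv_lim : Tendsto v l (nhds 0)) (hw_lim : Tendsto (fun t => w (u t)) l (nhds 0))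
    {t : ℝ} (hv_nonneg : 0 ≤ v t) (hw_nonneg : 0 ≤ w (u t)) :
    v t = w (u t) := by
  have hgrad : ∀ s, HasGradientAt (fun x => w x ^ 2 / 2) (w (u s) * w' s) (u s) := fun s =>
    (((hw s).pow 2).div_const 2 |>.congr_deriv (by ring)).hasGradientAt'
  have hlim : Tendsto (fun s => energy (fun x => w x ^ 2 / 2) (u s) (v s)) l (nhds 0) := by
    simpa [energy] using ((hv_lim.norm.pow 2).div_const 2).sub ((hw_lim.pow 2).div_const 2)
  have henergy : ‖v t‖ ^ 2 / 2 - w (u t) ^ 2 / 2 = 0 := energy_eq_of_tendsto hu hv hgrad hlim t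
  rw [Real.norm_eq_abs, sq_abs] at henergy
  exact (sq_eq_sq₀ hv_nonneg hw_nonneg).mp (by linarith)

/-- The speed `w(x)` at which the monotone transition profile from `a` to `b` passes the value `x`:
the profile solves `ρ' = w(ρ)`. -/
noncomputable def profileSpeed (a b x : ℝ) : ℝ :=
  √2 / 2 * (x ^ 2 - a ^ 2) * (b ^ 2 - x ^ 2)

namespace profileSpeed

theorem self_left (a b : ℝ) : profileSpeed a b a = 0 := by
  simp [profileSpeed]

theorem pos_of_mem_Ioo {a b x : ℝ} (ha : 0 ≤ a) (hx : x ∈ Set.Ioo a b) :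
    0 < profileSpeed a b x := by
  have hax : 0 < x ^ 2 - a ^ 2 := sub_pos.mpr (pow_lt_pow_left₀ hx.1 ha two_ne_zero)
  have hxb : 0 < b ^ 2 - x ^ 2 :=
    sub_pos.mpr (pow_lt_pow_left₀ hx.2 (ha.trans hx.1.le) two_ne_zero)
  unfold profileSpeed
  positivity

theorem hasDerivAt (a b x : ℝ) :
    HasDerivAt (profileSpeed a b) (√2 * x * (a ^ 2 + b ^ 2 - 2 * x ^ 2)) x := by
  have hsq : HasDerivAt (fun y : ℝ => y ^ 2) (2 * x) x := by simpa using hasDerivAt_pow 2 x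
  exact (((hsq.sub_const (a ^ 2)).const_mul (√2 / 2)).mul (hsq.const_sub (b ^ 2))).congr_deriv
    (by ring)

theorem mul_deriv_eq (a b x : ℝ) :
    profileSpeed a b x * deriv (profileSpeed a b) x =
      (x ^ 2 - a ^ 2) * (x ^ 2 - b ^ 2) * (2 * x ^ 2 - a ^ 2 - b ^ 2) * x := by
  rw [(hasDerivAt a b x).deriv, profileSpeed]
  linear_combination (x ^ 2 - a ^ 2) * (x ^ 2 - b ^ 2) * (2 * x ^ 2 - a ^ 2 - b ^ 2) * x / 2 *
    Real.sq_sqrt (zero_le_two (α := ℝ))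

end profileSpeed

/-- If `ρ₀` is `C²` with `ρ₀'' = f(ρ₀)`, `ρ₀' > 0`, `ρ₀(−∞) = a`,
`ρ₀(+∞) = b` and `ρ₀'(−∞) = 0`, then `a < ρ₀ < b` and
`ρ₀' = (√2/2)(ρ₀² − a²)(b² − ρ₀²)` everywhere. -/
theorem statement3 (a b : ℝ) (ha : 0 < a) (hab : a < b) (ρ₀ : ℝ → ℝ)
    (hreg : ContDiff ℝ 2 ρ₀)
    (hode : ∀ z, deriv (deriv ρ₀) z =
      ((ρ₀ z) ^ 2 - a ^ 2) * ((ρ₀ z) ^ 2 - b ^ 2)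
        * (2 * (ρ₀ z) ^ 2 - a ^ 2 - b ^ 2) * ρ₀ z)
    (hpos : ∀ z, 0 < deriv ρ₀ z)
    (hbot : Tendsto ρ₀ atBot (nhds a))
    (htop : Tendsto ρ₀ atTop (nhds b))
    (hdbot : Tendsto (deriv ρ₀) atBot (nhds 0)) :
    ∀ z, (a < ρ₀ z ∧ ρ₀ z < b) ∧
      deriv ρ₀ z = Real.sqrt 2 / 2 * ((ρ₀ z) ^ 2 - a ^ 2) * (b ^ 2 - (ρ₀ z) ^ 2) := by
  intro z
  have hrange : ρ₀ z ∈ Set.Ioo a b :=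
    mem_Ioo_of_strictMono_of_tendsto (strictMono_of_deriv_pos hpos) hbot htop z
  have hspeed (x : ℝ) : HasDerivAt (profileSpeed a b) (deriv (profileSpeed a b) x) x :=
    (profileSpeed.hasDerivAt a b x).differentiableAt.hasDerivAt
  have hρ (t : ℝ) : HasDerivAt ρ₀ (deriv ρ₀ t) t :=
    (hreg.differentiable two_ne_zero t).hasDerivAt
  have hρ' (t : ℝ) : HasDerivAt (deriv ρ₀)
      (profileSpeed a b (ρ₀ t) * deriv (profileSpeed a b) (ρ₀ t)) t := by
    rw [profileSpeed.mul_deriv_eq, ← hode]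
    exact (hreg.differentiable_deriv_two t).hasDerivAt
  have hspeed_lim : Tendsto (fun t => profileSpeed a b (ρ₀ t)) atBot (nhds 0) :=
    profileSpeed.self_left a b ▸ (hspeed a).continuousAt.tendsto.comp hbot
  exact ⟨hrange, eq_comp_of_hasDerivAt_of_tendsto_zero hρ hρ' (fun t => hspeed (ρ₀ t)) hdbot
    hspeed_lim (hpos z).le (profileSpeed.pos_of_mem_Ioo ha.le hrange).le⟩
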